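/- (2/(e − 1))·∫₀¹ eˣ·log Γ(x) dx = C·(3 − coth(1/2)) + Re ψ(i/(2π)) − 4·∑_{n=1}^∞ (log n)/(1 + 4n²π²), where C = log(2π) + γ and ψ = Γ′/Γ is the digamma function evaluated at the purely imaginary point i/(2π). -/

import Mathlib

open Real

/-- The digamma function `ψ = Γ′/Γ`, the logarithmic derivative of the complex
Gamma function. -/
noncomputable def digamma (z : ℂ) : ℂ := deriv Complex.Gamma z / Complex.Gamma z

/-!
Parseval's identity on `[0, 1]` is applied to `exp` and `log Γ`. The `n`-th Fourier coefficient of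
`exp` is `(e - 1) / (1 - 2πin)`; that of `log Γ`, found by Kummer, is
`1 / (4n) - i (γ + log (2πn)) / (2πn)`. Its cosine part follows from the reflection formula, its
sine part from Euler's limit for `Γ` and the asymptotics `Cin x = γ + log x + o(1)` of the entire
cosine integral. Of the sums over `n ≥ 1` that result, `∑ 1 / (n (1 + 4n²π²))` is
`Re ψ(i / (2π)) + γ`, by the partial fraction series of `ψ`, and `∑ 1 / (1 + 4n²π²)` is
`(coth (1 / 2) - 2) / 4`, by Parseval's identity for `exp` with itself.
-/

open Filter Topology Set MeasureTheory ComplexConjugate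
open Finset (range sum_range_succ)

theorem log_Gamma_add_one {x : ℝ} (hx : 0 < x) : log (Gamma (x + 1)) = log (Gamma x) + log x := by
  rw [Gamma_add_one hx.ne', log_mul hx.ne' (Gamma_pos_of_pos hx).ne', add_comm]

theorem ne_neg_natCast_of_pos {x : ℝ} (hx : 0 < x) (m : ℕ) : x ≠ -m :=
  ((neg_nonpos.2 m.cast_nonneg).trans_lt hx).ne'

theorem differentiableAt_Gamma_of_pos {x : ℝ} (hx : 0 < x) : DifferentiableAt ℝ Gamma x :=
  differentiableAt_Gamma (ne_neg_natCast_of_pos hx)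

theorem differentiableAt_log_Gamma {x : ℝ} (hx : 0 < x) : DifferentiableAt ℝ (log ∘ Gamma) x :=
  (differentiableAt_Gamma_of_pos hx).log (Gamma_pos_of_pos hx).ne'

theorem deriv_log_Gamma_le_log {x : ℝ} (hx : 0 < x) : deriv (log ∘ Gamma) x ≤ log x := by
  have h := convexOn_log_Gamma.deriv_le_slope hx (by positivity : 0 < x + 1) (lt_add_one x)
    (differentiableAt_log_Gamma hx)
  simpa [slope_def_field, log_Gamma_add_one hx] using h

theorem log_le_deriv_log_Gamma_add_one {x : ℝ} (hx : 0 < x) :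
    log x ≤ deriv (log ∘ Gamma) (x + 1) := by
  have h := convexOn_log_Gamma.slope_le_deriv hx (by positivity : 0 < x + 1) (lt_add_one x)
    (differentiableAt_log_Gamma (by positivity))
  simpa [slope_def_field, log_Gamma_add_one hx] using h

theorem tendsto_deriv_log_Gamma_sub_log :
    Tendsto (fun x ↦ deriv (log ∘ Gamma) x - log x) atTop (𝓝 0) := by
  refine tendsto_of_tendsto_of_tendsto_of_le_of_le' (tendsto_log_comp_add_sub_log (-1))
    tendsto_const_nhds ?_ ?_
  · filter_upwards [eventually_gt_atTop 1] with x hx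
    simpa using log_le_deriv_log_Gamma_add_one (by linarith : 0 < x + -1)
  · filter_upwards [eventually_gt_atTop 0] with x hx
    simpa using deriv_log_Gamma_le_log hx

theorem digamma_ofReal {x : ℝ} (hx : 0 < x) : digamma x = (deriv (log ∘ Gamma) x : ℝ) := by
  have hdiff : DifferentiableAt ℝ Gamma x := differentiableAt_Gamma_of_pos hx
  have hcomplex : HasDerivAt (fun y : ℝ ↦ Complex.Gamma y) (deriv Complex.Gamma x) x :=
    (Complex.differentiableAt_Gamma x fun m ↦ by
      exact_mod_cast ne_neg_natCast_of_pos hx m).hasDerivAt.comp_ofReal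
  simp_rw [Complex.Gamma_ofReal] at hcomplex
  rw [digamma, hcomplex.unique hdiff.hasDerivAt.ofReal_comp, Complex.Gamma_ofReal,
    Function.comp_def, deriv.log hdiff (Gamma_pos_of_pos hx).ne', Complex.ofReal_div]

theorem digamma_add_natCast {z : ℂ} (hz : ∀ m : ℕ, z ≠ -m) (n : ℕ) :
    digamma (z + n) = digamma z + ∑ k ∈ range n, (z + k)⁻¹ := by
  induction n with
  | zero => simp
  | succ n ih =>
    have hn (m : ℕ) : z + n ≠ -m := fun h ↦ hz (n + m) (by push_cast; linear_combination h)
    rw [sum_range_succ, ← add_assoc, ← ih, Nat.cast_succ, ← add_assoc]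
    exact Complex.digamma_apply_add_one _ hn

theorem differentiableAt_digamma {z : ℂ} (hz : 0 < z.re) : DifferentiableAt ℂ digamma z := by
  have hdiff {w : ℂ} (hw : 0 < w.re) : DifferentiableAt ℂ Complex.Gamma w :=
    Complex.differentiableAt_Gamma w fun m h ↦
      ne_neg_natCast_of_pos hw m (by simpa using congrArg Complex.re h)
  have hopen : IsOpen {w : ℂ | 0 < w.re} := isOpen_lt continuous_const Complex.continuous_re
  have hGamma : DifferentiableOn ℂ Complex.Gamma {w : ℂ | 0 < w.re} := fun w hw ↦
    (hdiff hw).differentiableWithinAt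
  exact ((hGamma.deriv hopen).differentiableAt (hopen.mem_nhds hz)).div
    (hdiff hz) (Complex.Gamma_ne_zero_of_re_pos hz)

theorem norm_inv_sub_inv_le {z : ℂ} {δ R : ℝ} (hδ : 0 < δ) (hδ1 : δ ≤ 1) (hre : δ ≤ z.re)
    (hR : ‖z‖ ≤ R) (k : ℕ) :
    ‖((k : ℂ) + 1)⁻¹ - (z + k)⁻¹‖ ≤ (R + 1) / δ * (1 / ((k : ℝ) + 1) ^ 2) := by
  have hk : ‖(k : ℂ) + 1‖ = k + 1 := by exact_mod_cast Complex.norm_natCast (k + 1)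
  have hlow : δ * (k + 1) ≤ ‖z + k‖ := calc
    δ * (k + 1) ≤ z.re + k := by nlinarith [k.cast_nonneg (α := ℝ)]
    _ = (z + k).re := by simp
    _ ≤ ‖z + k‖ := Complex.re_le_norm _
  have hk0 : (k : ℂ) + 1 ≠ 0 := k.cast_add_one_ne_zero
  have hz0 : z + k ≠ 0 := norm_pos_iff.1 (lt_of_lt_of_le (by positivity) hlow)
  have hR0 : 0 ≤ R := (norm_nonneg z).trans hR
  have hnum : ‖z - 1‖ ≤ R + 1 := by linarith [norm_sub_le z 1, norm_one (α := ℂ)]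
  calc ‖((k : ℂ) + 1)⁻¹ - (z + k)⁻¹‖ = ‖z - 1‖ / ((k + 1) * ‖z + k‖) := by
        rw [inv_sub_inv hk0 hz0, norm_div, norm_mul, hk]
        congr 2
        ring
    _ ≤ (R + 1) / ((k + 1) * (δ * (k + 1))) := by
        gcongr
    _ = (R + 1) / δ * (1 / ((k : ℝ) + 1) ^ 2) := by field_simp

theorem summable_one_div_nat_add_one_sq : Summable fun k : ℕ ↦ 1 / ((k : ℝ) + 1) ^ 2 := by
  exact_mod_cast (summable_nat_add_iff 1).2 (summable_one_div_nat_pow.2 one_lt_two)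

theorem summable_inv_sub_inv {z : ℂ} (hz : 0 < z.re) :
    Summable fun k : ℕ ↦ ((k : ℂ) + 1)⁻¹ - (z + k)⁻¹ :=
  .of_norm_bounded (summable_one_div_nat_add_one_sq.mul_left _)
    (norm_inv_sub_inv_le (lt_min hz one_pos) (min_le_right _ _) (min_le_left _ _) le_rfl)

theorem hasSum_digamma_ofReal {x : ℝ} (hx : 0 < x) :
    HasSum (fun k : ℕ ↦ ((k : ℂ) + 1)⁻¹ - ((x : ℂ) + k)⁻¹)
      (digamma x + eulerMascheroniConstant) := by
  have hne (m : ℕ) : (x : ℂ) ≠ -m := by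
    exact_mod_cast ne_neg_natCast_of_pos hx m
  have hdig : Tendsto (fun n : ℕ ↦ deriv (log ∘ Gamma) (x + n) - log n) atTop (𝓝 0) := by
    have hshift := (tendsto_log_comp_add_sub_log x).comp tendsto_natCast_atTop_atTop
    have hdigamma := tendsto_deriv_log_Gamma_sub_log.comp
      (tendsto_atTop_add_const_left _ x tendsto_natCast_atTop_atTop)
    simpa [Function.comp_def, add_comm x] using hdigamma.add hshift
  have hlim : Tendsto
      (fun n : ℕ ↦ ∑ k ∈ range n, (((k : ℂ) + 1)⁻¹ - ((x : ℂ) + k)⁻¹)) atTop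
      (𝓝 (digamma x + (eulerMascheroniConstant - 0 : ℝ))) := by
    refine (((Complex.continuous_ofReal.tendsto _).comp
      (tendsto_harmonic_sub_log.sub hdig)).const_add (digamma x)).congr fun n ↦ ?_
    have hpos : 0 < x + n := by positivity
    have hadd := digamma_add_natCast hne n
    rw [← Complex.ofReal_natCast, ← Complex.ofReal_add, digamma_ofReal hpos] at hadd
    simp only [Function.comp_apply, Complex.ofReal_sub, hadd, harmonic, Finset.sum_sub_distrib]
    push_cast
    ring
  rw [sub_zero] at hlim
  have hsum := (summable_inv_sub_inv (z := x) (by simpa)).hasSum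
  rwa [tendsto_nhds_unique hsum.tendsto_sum_nat hlim] at hsum

theorem hasSum_digamma {z : ℂ} (hz : 0 < z.re) :
    HasSum (fun k : ℕ ↦ ((k : ℂ) + 1)⁻¹ - (z + k)⁻¹) (digamma z + eulerMascheroniConstant) := by
  obtain ⟨δ, hδ, hδz⟩ := exists_between (lt_min hz one_pos)
  obtain ⟨hδre, hδ1⟩ := lt_min_iff.1 hδz
  let S : Set ℂ := {w | δ < w.re} ∩ Metric.ball 0 (‖z‖ + 2)
  have hopen : IsOpen S :=
    (isOpen_lt continuous_const Complex.continuous_re).inter Metric.isOpen_ball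
  have hpre : IsPreconnected S :=
    ((convex_halfSpace_re_gt δ).inter (convex_ball _ _)).isPreconnected
  have hre {w : ℂ} (hw : w ∈ S) : 0 < w.re := hδ.trans hw.1
  have hdig : DifferentiableOn ℂ (fun w ↦ digamma w + eulerMascheroniConstant) S := fun w hw ↦
    ((differentiableAt_digamma (hre hw)).add_const _).differentiableWithinAt
  have hseries : DifferentiableOn ℂ (fun w : ℂ ↦ ∑' k : ℕ, (((k : ℂ) + 1)⁻¹ - (w + k)⁻¹)) S := by
    refine Complex.differentiableOn_tsum_of_summable_norm
      (summable_one_div_nat_add_one_sq.mul_left _) (fun k ↦ ?_) hopen fun k w hw ↦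
        norm_inv_sub_inv_le hδ hδ1.le hw.1.le (mem_ball_zero_iff.1 hw.2).le k
    refine .sub (by fun_prop) (.inv (by fun_prop) fun w hw h ↦ ?_)
    have hpos : 0 < w.re + k := add_pos_of_pos_of_nonneg (hre hw) k.cast_nonneg
    exact hpos.ne' (by simpa using congrArg Complex.re h)
  have hreal : Tendsto (fun n : ℕ ↦ ((1 + 1 / ((n : ℝ) + 1) : ℝ) : ℂ)) atTop (𝓝[≠] 1) := by
    refine tendsto_nhdsWithin_iff.2 ⟨?_, .of_forall fun n ↦ ?_⟩
    · simpa [Function.comp_def] using (Complex.continuous_ofReal.tendsto _).comp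
        (tendsto_one_div_add_atTop_nhds_zero_nat.const_add (1 : ℝ))
    · norm_cast
      simpa using n.cast_add_one_ne_zero
  have heq : EqOn (fun w ↦ digamma w + eulerMascheroniConstant)
      (fun w ↦ ∑' k : ℕ, (((k : ℂ) + 1)⁻¹ - (w + k)⁻¹)) S := by
    refine (hdig.analyticOnNhd hopen).eqOn_of_preconnected_of_frequently_eq
      (hseries.analyticOnNhd hopen) hpre (z₀ := 1) ⟨by simpa, ?_⟩ (hreal.frequently (.of_forall
        fun n ↦ ((hasSum_digamma_ofReal (by positivity)).tsum_eq.symm)))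
    rw [mem_ball_zero_iff, norm_one]
    linarith [norm_nonneg z]
  have hzS : z ∈ S := ⟨hδre, by simp⟩
  simpa only [← heq hzS] using (summable_inv_sub_inv hz).hasSum

theorem hasSum_re_digamma_mul_I {y : ℝ} (hy : y ≠ 0) :
    HasSum (fun k : ℕ ↦ y ^ 2 / (((k : ℝ) + 1) * (((k : ℝ) + 1) ^ 2 + y ^ 2)))
      ((digamma (y * Complex.I)).re + eulerMascheroniConstant) := by
  have hne (m : ℕ) : (y : ℂ) * Complex.I ≠ -m := fun h ↦ hy (by simpa using congrArg Complex.im h)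
  have hshift : (digamma (y * Complex.I + 1)).re = (digamma (y * Complex.I)).re := by
    have h := digamma_add_natCast hne 1
    simp only [Nat.cast_one, Finset.range_one, Finset.sum_singleton, Nat.cast_zero, add_zero] at h
    simp [h, Complex.inv_re]
  have h := Complex.hasSum_re (hasSum_digamma (z := y * Complex.I + 1) (by simp))
  rw [Complex.add_re, Complex.ofReal_re, hshift] at h
  refine h.congr_fun fun k ↦ ?_
  have hk : (k : ℝ) + 1 ≠ 0 := k.cast_add_one_ne_zero
  have hterm : ((k : ℂ) + 1)⁻¹.re = ((k : ℝ) + 1)⁻¹ := by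
    rw [← Complex.ofReal_re ((k : ℝ) + 1)⁻¹]
    push_cast
    rfl
  have hre : ((y : ℂ) * Complex.I + 1 + k).re = k + 1 := by simp [add_comm]
  have him : ((y : ℂ) * Complex.I + 1 + k).im = y := by simp
  rw [Complex.sub_re, hterm, Complex.inv_re, Complex.normSq_apply, hre, him]
  field_simp
  ring

theorem mul_sinc_eq_sin (x : ℝ) : x * sinc x = sin x := by
  rcases eq_or_ne x 0 with rfl | hx
  · simp
  · rw [sinc_of_ne_zero hx, mul_div_cancel₀ _ hx]

theorem sinc_pos {x : ℝ} (hx : x ∈ Ico 0 π) : 0 < sinc x := by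
  rcases hx.1.eq_or_lt with rfl | h0
  · simp
  · rw [sinc_of_ne_zero h0.ne']
    exact div_pos (sin_pos_of_pos_of_lt_pi h0 hx.2) h0

theorem one_sub_cos_mul_div_eq (a x : ℝ) :
    (1 - cos (a * x)) / x = a * (sin (a * x / 2) * sinc (a * x / 2)) := by
  rcases eq_or_ne x 0 with rfl | hx
  · simp
  · have hcos : cos (a * x) = 1 - 2 * sin (a * x / 2) ^ 2 := by
      rw [← cos_two_mul_eq_one_sub, mul_div_cancel₀ _ two_ne_zero]
    rw [div_eq_iff hx]
    linear_combination (-2 * sin (a * x / 2)) * mul_sinc_eq_sin (a * x / 2) - hcos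

theorem continuous_one_sub_cos_mul_div (a : ℝ) : Continuous fun x ↦ (1 - cos (a * x)) / x := by
  simp_rw [one_sub_cos_mul_div_eq]
  have := continuous_sinc
  fun_prop

/-- The entire cosine integral `Cin x = ∫₀ˣ (1 - cos t) / t dt`. -/
noncomputable def cin (x : ℝ) : ℝ := ∫ t in (0 : ℝ)..x, (1 - cos t) / t

theorem integral_one_sub_cos_mul_div (a b : ℝ) :
    ∫ x in (0 : ℝ)..b, (1 - cos (a * x)) / x = cin (a * b) := by
  have h := intervalIntegral.smul_integral_comp_mul_left (a := 0) (b := b)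
    (fun t ↦ (1 - cos t) / t) a
  rw [mul_zero, smul_eq_mul, ← intervalIntegral.integral_const_mul] at h
  rw [cin, ← h]
  refine intervalIntegral.integral_congr fun x _ ↦ ?_
  rcases eq_or_ne a 0 with rfl | ha
  · simp
  · simp only [← mul_div_assoc, mul_div_mul_left _ _ ha]

theorem two_mul_sin_mul_sum_sin_odd (x : ℝ) (n : ℕ) :
    2 * sin x * ∑ k ∈ range n, sin ((2 * k + 1) * x) = 1 - cos (2 * n * x) := by
  induction n with
  | zero => simp
  | succ n ih =>
    have h := cos_sub_cos (2 * n * x) (2 * (n + 1 : ℕ) * x)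
    push_cast at h ⊢
    rw [show (2 * n * x + 2 * (n + 1) * x) / 2 = (2 * n + 1) * x by ring,
      show (2 * n * x - 2 * (n + 1) * x) / 2 = -x by ring, sin_neg] at h
    rw [sum_range_succ, mul_add, ih]
    linear_combination -h

theorem two_mul_sin_mul_sum_cos_odd (x : ℝ) (n : ℕ) :
    2 * sin x * ∑ k ∈ range n, cos ((2 * k + 1) * x) = sin (2 * n * x) := by
  induction n with
  | zero => simp
  | succ n ih =>
    have h := sin_sub_sin (2 * (n + 1 : ℕ) * x) (2 * n * x)
    push_cast at h ⊢
    rw [show (2 * (n + 1) * x + 2 * n * x) / 2 = (2 * n + 1) * x by ring,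
      show (2 * (n + 1) * x - 2 * n * x) / 2 = x by ring] at h
    rw [sum_range_succ, mul_add, ih]
    linear_combination -h

theorem sum_two_div_two_mul_add_one (n : ℕ) :
    ∑ k ∈ range n, 2 / (2 * (k : ℝ) + 1) = 2 * harmonic (2 * n) - harmonic n := by
  induction n with
  | zero => simp
  | succ n ih =>
    rw [sum_range_succ, ih, show 2 * (n + 1) = 2 * n + 1 + 1 by ring]
    simp only [harmonic_succ]
    push_cast
    field

theorem integral_one_sub_cos_div_sin (n : ℕ) :
    ∫ x in (0 : ℝ)..π / 2, (1 - cos (2 * n * x)) / sin x = 2 * harmonic (2 * n) - harmonic n := by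
  have hterm (k : ℕ) : ∫ x in (0 : ℝ)..π / 2, 2 * sin ((2 * k + 1) * x) = 2 / (2 * k + 1) := by
    have hcos : cos ((2 * k + 1) * (π / 2)) = 0 :=
      cos_eq_zero_iff.2 ⟨k, by push_cast; ring⟩
    rw [intervalIntegral.integral_const_mul,
      intervalIntegral.integral_comp_mul_left _ (by positivity), integral_sin, hcos]
    simp [div_eq_mul_inv]
  rw [← sum_two_div_two_mul_add_one, ← Finset.sum_congr rfl fun k _ ↦ hterm k,
    ← intervalIntegral.integral_finsetSum fun k _ ↦
      (by fun_prop : Continuous _).intervalIntegrable _ _]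
  refine intervalIntegral.integral_congr fun x hx ↦ ?_
  rw [uIcc_of_le (by positivity)] at hx
  rcases hx.1.eq_or_lt with rfl | h0
  · simp
  · have hsin : sin x ≠ 0 := (sin_pos_of_pos_of_lt_pi h0 (by linarith [hx.2, pi_pos])).ne'
    simp only [← Finset.mul_sum, div_eq_iff hsin, ← two_mul_sin_mul_sum_sin_odd]
    ring

theorem continuousOn_log_sinc_sub_log_one_add_cos :
    ContinuousOn (fun x ↦ log (sinc x) - log (1 + cos x)) (Icc 0 (π / 2)) := by
  refine (continuous_sinc.continuousOn.log fun x hx ↦ ?_).sub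
    (ContinuousOn.log (by fun_prop) fun x hx ↦ ?_)
  · exact (sinc_pos ⟨hx.1, by linarith [hx.2, pi_pos]⟩).ne'
  · have := cos_nonneg_of_mem_Icc ⟨by linarith [hx.1, pi_pos], hx.2⟩
    positivity

theorem hasDerivAt_log_sinc_sub_log_one_add_cos {x : ℝ} (hx : x ∈ Ioo 0 (π / 2)) :
    HasDerivAt (fun x ↦ log (sinc x) - log (1 + cos x)) (1 / sin x - 1 / x) x := by
  have hsin {y : ℝ} (hy : y ∈ Ioo 0 (π / 2)) : 0 < sin y :=
    sin_pos_of_pos_of_lt_pi hy.1 (by linarith [hy.2, pi_pos])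
  have hcos : 0 < cos x := cos_pos_of_mem_Ioo ⟨by linarith [hx.1, pi_pos], hx.2⟩
  have h := (((hasDerivAt_sin x).log (hsin hx).ne').sub (hasDerivAt_log hx.1.ne')).sub
    (((hasDerivAt_cos x).const_add 1).log (by positivity))
  have hval : 1 / sin x - 1 / x = cos x / sin x - x⁻¹ - -sin x / (1 + cos x) := by
    have := (hsin hx).ne'
    have := hx.1.ne'
    field_simp
    linear_combination -x * sin_sq_add_cos_sq x
  rw [hval]
  refine h.congr_of_eventuallyEq ?_
  filter_upwards [Ioo_mem_nhds hx.1 hx.2] with y hy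
  simp [sinc_of_ne_zero hy.1.ne', log_div (hsin hy).ne' hy.1.ne']

theorem intervalIntegrable_one_div_sin_sub_one_div :
    IntervalIntegrable (fun x ↦ 1 / sin x - 1 / x) volume 0 (π / 2) := by
  rw [intervalIntegrable_iff_integrableOn_Ioc_of_le (by positivity)]
  refine intervalIntegral.integrableOn_deriv_of_nonneg continuousOn_log_sinc_sub_log_one_add_cos
    (fun x ↦ hasDerivAt_log_sinc_sub_log_one_add_cos) fun x hx ↦ ?_
  have := sin_pos_of_pos_of_lt_pi hx.1 (by linarith [hx.2, pi_pos])
  exact sub_nonneg.2 (one_div_le_one_div_of_le this (sin_le hx.1.le))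

theorem integral_one_div_sin_sub_one_div :
    ∫ x in (0 : ℝ)..π / 2, (1 / sin x - 1 / x) = log (4 / π) := by
  rw [intervalIntegral.integral_eq_sub_of_hasDerivAt_of_le (by positivity)
    continuousOn_log_sinc_sub_log_one_add_cos
    (fun x ↦ hasDerivAt_log_sinc_sub_log_one_add_cos) intervalIntegrable_one_div_sin_sub_one_div,
    sinc_of_ne_zero (by positivity), sin_pi_div_two, cos_pi_div_two, sinc_zero, cos_zero, log_one,
    add_zero, log_one, zero_sub, sub_zero, sub_neg_eq_add, ← log_mul (by positivity) (by norm_num)]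
  congr 1
  ring

theorem tendsto_integral_mul_cos {f : ℝ → ℝ} (hf : Integrable f) :
    Tendsto (fun w ↦ ∫ x, f x * cos (w * x)) atTop (𝓝 0) := by
  have hw : Tendsto (fun w : ℝ ↦ w / (2 * π)) atTop (cocompact ℝ) :=
    (tendsto_id.atTop_div_const (by positivity)).mono_right atTop_le_cocompact
  refine ((Complex.continuous_re.tendsto 0).comp
    ((Real.tendsto_integral_exp_smul_cocompact fun x ↦ (f x : ℂ)).comp hw)).congr fun w ↦ ?_
  have hint : Integrable fun x ↦ fourierChar (-(x * (w / (2 * π)))) • (f x : ℂ) := by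
    simpa [mul_comm] using (Real.fourierIntegral_convergent_iff (w / (2 * π))).2 hf.ofReal
  have hre := Complex.reCLM.integral_comp_comm hint
  rw [Function.comp_apply, Function.comp_apply, ← Complex.reCLM_apply, ← hre]
  refine integral_congr_ae (.of_forall fun x ↦ ?_)
  have harg : 2 * π * -(x * (w / (2 * π))) = -(w * x) := by field_simp
  simp only [Complex.reCLM_apply, Circle.smul_def, fourierChar_apply, smul_eq_mul,
    Complex.re_mul_ofReal, Complex.exp_ofReal_mul_I_re, harg, cos_neg]
  ring

theorem tendsto_setIntegral_mul_cos {f : ℝ → ℝ} {s : Set ℝ} (hs : MeasurableSet s)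
    (hf : IntegrableOn f s) : Tendsto (fun w ↦ ∫ x in s, f x * cos (w * x)) atTop (𝓝 0) := by
  refine (tendsto_integral_mul_cos (hf.integrable_indicator hs)).congr fun w ↦ ?_
  simp_rw [← integral_indicator hs, indicator_mul_left]

theorem tendsto_intervalIntegral_mul_cos {f : ℝ → ℝ} {a b : ℝ}
    (hf : IntervalIntegrable f volume a b) :
    Tendsto (fun w ↦ ∫ x in a..b, f x * cos (w * x)) atTop (𝓝 0) := by
  simpa only [intervalIntegral, sub_zero] using
    (tendsto_setIntegral_mul_cos measurableSet_Ioc hf.1).sub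
      (tendsto_setIntegral_mul_cos measurableSet_Ioc hf.2)

theorem cin_nat_mul_pi (n : ℕ) :
    cin (n * π) = 2 * harmonic (2 * n) - harmonic n - log (4 / π) +
      ∫ x in (0 : ℝ)..π / 2, (1 / sin x - 1 / x) * cos (2 * n * x) := by
  have hcin : IntervalIntegrable (fun x ↦ (1 - cos (2 * n * x)) / x) volume 0 (π / 2) :=
    (continuous_one_sub_cos_mul_div _).intervalIntegrable _ _
  have hcosec := intervalIntegrable_one_div_sin_sub_one_div
  have hmul : IntervalIntegrable (fun x ↦ (1 / sin x - 1 / x) * cos (2 * n * x)) volume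
      0 (π / 2) :=
    hcosec.mul_continuousOn (by fun_prop)
  have hsplit := integral_one_sub_cos_div_sin n
  have heq (x : ℝ) : (1 - cos (2 * n * x)) / sin x = (1 - cos (2 * n * x)) / x +
      ((1 / sin x - 1 / x) - (1 / sin x - 1 / x) * cos (2 * n * x)) := by ring
  simp_rw [heq] at hsplit
  rw [intervalIntegral.integral_add hcin (hcosec.sub hmul),
    intervalIntegral.integral_sub hcosec hmul, integral_one_sub_cos_mul_div,
    integral_one_div_sin_sub_one_div, show 2 * (n : ℝ) * (π / 2) = n * π by ring] at hsplit
  linear_combination hsplit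

theorem tendsto_cin_nat_mul_pi_sub_log :
    Tendsto (fun n : ℕ ↦ cin (n * π) - log (n * π)) atTop (𝓝 eulerMascheroniConstant) := by
  have htwo : Tendsto (fun n : ℕ ↦ 2 * n) atTop atTop := tendsto_id.const_mul_atTop' two_pos
  have hrest : Tendsto (fun n : ℕ ↦ ∫ x in (0 : ℝ)..π / 2,
      (1 / sin x - 1 / x) * cos (2 * n * x)) atTop (𝓝 0) := by
    simpa [Function.comp_def] using (tendsto_intervalIntegral_mul_cos
      intervalIntegrable_one_div_sin_sub_one_div).comp (tendsto_natCast_atTop_atTop.comp htwo)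
  have h := (((tendsto_harmonic_sub_log.comp htwo).const_mul 2).sub
    tendsto_harmonic_sub_log).add hrest
  rw [show 2 * eulerMascheroniConstant - eulerMascheroniConstant + 0 =
    eulerMascheroniConstant by ring] at h
  refine h.congr' ?_
  filter_upwards [eventually_gt_atTop 0] with n hn
  have hn0 : (n : ℝ) ≠ 0 := by positivity
  rw [cin_nat_mul_pi, log_mul hn0 pi_ne_zero, log_div four_ne_zero pi_ne_zero,
    show (4 : ℝ) = 2 * 2 by norm_num, log_mul two_ne_zero two_ne_zero]
  simp only [Function.comp_apply, Nat.cast_mul, Nat.cast_ofNat, log_mul two_ne_zero hn0]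
  ring

theorem memLp_log : MemLp log 2 (volume.restrict (Ioc 0 1)) := by
  rw [memLp_two_iff_integrable_sq measurable_log.aestronglyMeasurable]
  have hrpow : IntegrableOn (fun x : ℝ ↦ 16 * x ^ (-(1 / 2) : ℝ)) (Ioc 0 1) :=
    (intervalIntegrable_iff_integrableOn_Ioc_of_le zero_le_one).1
      ((intervalIntegral.intervalIntegrable_rpow' (by norm_num)).const_mul 16)
  refine hrpow.mono' (measurable_log.pow_const 2).aestronglyMeasurable ?_
  filter_upwards [ae_restrict_mem measurableSet_Ioc] with x hx
  have hpos : 0 < x ^ (1 / 4 : ℝ) := rpow_pos_of_pos hx.1 _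
  have hbound : |log x * x ^ (1 / 4 : ℝ)| ≤ 4 := by
    simpa using (abs_log_mul_self_rpow_lt x (1 / 4) hx.1 hx.2 (by norm_num)).le
  have hsq : (x ^ (1 / 4 : ℝ)) ^ 2 = x ^ (1 / 2 : ℝ) := by
    rw [← rpow_mul_natCast hx.1.le]
    norm_num
  rw [norm_of_nonneg (sq_nonneg _), rpow_neg hx.1.le, ← div_eq_mul_inv, ← hsq,
    le_div_iff₀ (by positivity), ← mul_pow, ← sq_abs]
  calc |log x * x ^ (1 / 4 : ℝ)| ^ 2 ≤ 4 ^ 2 := by gcongr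
    _ = 16 := by norm_num

theorem memLp_two_of_continuousOn {f : ℝ → ℝ} {a b : ℝ} (hf : ContinuousOn f (Icc a b)) :
    MemLp f 2 (volume.restrict (Ioc a b)) :=
  ((memLp_two_iff_integrable_sq (hf.aestronglyMeasurable measurableSet_Icc)).2
    ((hf.pow 2).integrableOn_compact isCompact_Icc)).mono_measure
      (Measure.restrict_mono Ioc_subset_Icc_self le_rfl)

theorem memLp_log_Gamma : MemLp (fun x ↦ log (Gamma x)) 2 (volume.restrict (Ioc 0 1)) := by
  have hcont : ContinuousOn (fun x ↦ log (Gamma (x + 1))) (Icc 0 1) := fun x hx ↦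
    ((differentiableAt_log_Gamma (by linarith [hx.1] : 0 < x + 1)).continuousAt.comp
      (f := fun x : ℝ ↦ x + 1) (by fun_prop)).continuousWithinAt
  refine ((memLp_two_of_continuousOn hcont).sub memLp_log).ae_eq ?_
  filter_upwards [ae_restrict_mem measurableSet_Ioc] with x hx
  simp [log_Gamma_add_one hx.1]

theorem intervalIntegrable_log_Gamma : IntervalIntegrable (fun x ↦ log (Gamma x)) volume 0 1 :=
  (intervalIntegrable_iff_integrableOn_Ioc_of_le zero_le_one).2
    (memLp_log_Gamma.integrable one_le_two)

theorem integral_log_sin_pi_mul_mul {g : ℝ → ℝ} :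
    ∫ x in (0 : ℝ)..1, log (sin (π * x)) * g (π * x) =
      π⁻¹ * ∫ x in (0 : ℝ)..π, log (sin x) * g x := by
  rw [intervalIntegral.integral_comp_mul_left (fun x ↦ log (sin x) * g x) pi_ne_zero]
  simp

theorem two_mul_integral_log_Gamma_mul {g : ℝ → ℝ} (hg : Continuous g)
    (hsymm : ∀ x, g (1 - x) = g x) :
    2 * ∫ x in (0 : ℝ)..1, log (Gamma x) * g x =
      log π * (∫ x in (0 : ℝ)..1, g x) - ∫ x in (0 : ℝ)..1, log (sin (π * x)) * g x := by
  have hGamma : IntervalIntegrable (fun x ↦ log (Gamma x) * g x) volume 0 1 :=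
    intervalIntegrable_log_Gamma.mul_continuousOn hg.continuousOn
  have hlogsin : IntervalIntegrable (fun x ↦ log (sin (π * x)) * g x) volume 0 1 := by
    have h := (intervalIntegrable_log_sin (a := 0) (b := π)).comp_mul_left (c := π)
    rw [zero_div, div_self pi_ne_zero] at h
    exact h.mul_continuousOn hg.continuousOn
  have hrefl : ∫ x in (0 : ℝ)..1, log (Gamma (1 - x)) * g x =
      ∫ x in (0 : ℝ)..1, log (Gamma x) * g x := by
    have h := intervalIntegral.integral_comp_sub_left (a := 0) (b := 1)
      (fun x ↦ log (Gamma x) * g x) 1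
    simpa only [hsymm, sub_self, sub_zero] using h
  have hGamma' : IntervalIntegrable (fun x ↦ log (Gamma (1 - x)) * g x) volume 0 1 := by
    simpa [hsymm] using (hGamma.comp_sub_left 1).symm
  rw [two_mul]
  nth_rw 2 [← hrefl]
  rw [← intervalIntegral.integral_add hGamma hGamma', ← intervalIntegral.integral_const_mul,
    ← intervalIntegral.integral_sub ((hg.intervalIntegrable _ _).const_mul _) hlogsin]
  refine intervalIntegral.integral_congr_Ioo_of_le zero_le_one fun x hx ↦ ?_
  have hsin : 0 < sin (π * x) :=
    sin_pos_of_pos_of_lt_pi (mul_pos pi_pos hx.1) (mul_lt_of_lt_one_right pi_pos hx.2)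
  have hlog : log (Gamma x) + log (Gamma (1 - x)) = log π - log (sin (π * x)) := by
    rw [← log_mul (Gamma_pos_of_pos hx.1).ne' (Gamma_pos_of_pos (sub_pos.2 hx.2)).ne',
      Gamma_mul_Gamma_one_sub, log_div pi_ne_zero hsin.ne']
  linear_combination g x * hlog

theorem integral_log_Gamma : ∫ x in (0 : ℝ)..1, log (Gamma x) = log (2 * π) / 2 := by
  have h := two_mul_integral_log_Gamma_mul (g := fun _ ↦ 1) continuous_const fun _ ↦ rfl
  rw [integral_log_sin_pi_mul_mul (g := fun _ ↦ 1)] at h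
  simp only [mul_one, intervalIntegral.integral_const, sub_zero, smul_eq_mul,
    integral_log_sin_zero_pi] at h
  rw [log_mul two_ne_zero pi_ne_zero]
  field_simp at h
  linarith

theorem integral_cos_two_mul_nat_mul (n : ℕ) :
    ∫ x in (0 : ℝ)..π, cos (2 * n * x) = if n = 0 then π else 0 := by
  split_ifs with hn
  · simp [hn]
  · rw [intervalIntegral.integral_comp_mul_left _ (by positivity), integral_cos,
      show 2 * (n : ℝ) * π = (2 * n : ℕ) * π by push_cast; ring, sin_nat_mul_pi]
    simp

theorem integral_two_mul_cos_mul_cos_odd (n : ℕ) :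
    ∫ x in (0 : ℝ)..π, 2 * cos x * cos ((2 * n + 1) * x) = if n = 0 then π else 0 := by
  have hprod (x : ℝ) : 2 * cos x * cos ((2 * n + 1) * x) =
      cos (2 * n * x) + cos (2 * (n + 1 : ℕ) * x) := by
    rw [cos_add_cos]
    push_cast
    rw [show (2 * n * x + 2 * (n + 1) * x) / 2 = (2 * n + 1) * x by ring,
      show (2 * n * x - 2 * (n + 1) * x) / 2 = -x by ring, cos_neg]
    ring
  simp_rw [hprod]
  rw [intervalIntegral.integral_add (Continuous.intervalIntegrable (by fun_prop) _ _)
    (Continuous.intervalIntegrable (by fun_prop) _ _), integral_cos_two_mul_nat_mul,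
    integral_cos_two_mul_nat_mul, if_neg n.succ_ne_zero, add_zero]

theorem integral_two_mul_cos_mul_sum_cos_odd {n : ℕ} (hn : n ≠ 0) :
    ∫ x in (0 : ℝ)..π, 2 * cos x * ∑ k ∈ range n, cos ((2 * k + 1) * x) = π := by
  simp_rw [Finset.mul_sum]
  rw [intervalIntegral.integral_finsetSum fun k _ ↦
    (by fun_prop : Continuous _).intervalIntegrable _ _]
  simp_rw [integral_two_mul_cos_mul_cos_odd]
  simp [Nat.pos_of_ne_zero hn]

theorem integral_log_sin_mul_cos_two_mul {n : ℕ} (hn : n ≠ 0) :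
    ∫ x in (0 : ℝ)..π, log (sin x) * cos (2 * n * x) = -(π / (2 * n)) := by
  have hcont : Continuous fun x ↦ log (sin x) * sin (2 * n * x) := by
    have heq : (fun x ↦ log (sin x) * sin (2 * n * x)) = fun x ↦
        2 * (sin x * log (sin x)) * ∑ k ∈ range n, cos ((2 * k + 1) * x) := by
      funext x
      rw [← two_mul_sin_mul_sum_cos_odd]
      ring
    rw [heq]
    have : Continuous fun x ↦ sin x * log (sin x) := continuous_mul_log.comp continuous_sin
    fun_prop
  have hderiv : ∀ x ∈ Ioo 0 π, HasDerivAt (fun x ↦ log (sin x) * sin (2 * n * x))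
      (2 * cos x * (∑ k ∈ range n, cos ((2 * k + 1) * x)) +
        2 * n * (log (sin x) * cos (2 * n * x))) x := by
    intro x hx
    have hsin : sin x ≠ 0 := (sin_pos_of_mem_Ioo hx).ne'
    refine (((hasDerivAt_sin x).log hsin).mul
      ((hasDerivAt_id x).const_mul (2 * (n : ℝ))).sin).congr_deriv ?_
    simp only [id, ← two_mul_sin_mul_sum_cos_odd]
    field
  have hlogsin : IntervalIntegrable (fun x ↦ 2 * n * (log (sin x) * cos (2 * n * x))) volume 0 π :=
    (intervalIntegrable_log_sin.mul_continuousOn (by fun_prop)).const_mul _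
  have hsum : IntervalIntegrable
      (fun x ↦ 2 * cos x * ∑ k ∈ range n, cos ((2 * k + 1) * x)) volume 0 π :=
    Continuous.intervalIntegrable (by fun_prop) _ _
  have hFTC := intervalIntegral.integral_eq_sub_of_hasDerivAt_of_le pi_nonneg hcont.continuousOn
    hderiv (hsum.add hlogsin)
  rw [intervalIntegral.integral_add hsum hlogsin, intervalIntegral.integral_const_mul,
    integral_two_mul_cos_mul_sum_cos_odd hn] at hFTC
  simp only [sin_pi, sin_zero, log_zero, zero_mul, sub_self] at hFTC
  have : (n : ℝ) ≠ 0 := Nat.cast_ne_zero.2 hn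
  field_simp
  linarith

theorem integral_log_Gamma_mul_cos {n : ℕ} (hn : n ≠ 0) :
    ∫ x in (0 : ℝ)..1, log (Gamma x) * cos (2 * π * n * x) = 1 / (4 * n) := by
  have hsymm (x : ℝ) : cos (2 * π * n * (1 - x)) = cos (2 * π * n * x) := by
    rw [show 2 * π * n * (1 - x) = n * (2 * π) - 2 * π * n * x by ring, cos_nat_mul_two_pi_sub]
  have h := two_mul_integral_log_Gamma_mul (g := fun x ↦ cos (2 * π * n * x)) (by fun_prop) hsymm
  have harg (x : ℝ) : 2 * π * n * x = 2 * n * (π * x) := by ring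
  have hmean : ∫ x in (0 : ℝ)..1, cos (2 * n * (π * x)) = 0 := by
    rw [intervalIntegral.integral_comp_mul_left (fun x ↦ cos (2 * n * x)) pi_ne_zero, mul_zero,
      mul_one, integral_cos_two_mul_nat_mul, if_neg hn, smul_zero]
  simp only [harg] at h ⊢
  rw [integral_log_sin_pi_mul_mul (g := fun x ↦ cos (2 * n * x)), hmean,
    integral_log_sin_mul_cos_two_mul hn] at h
  have : (n : ℝ) ≠ 0 := Nat.cast_ne_zero.2 hn
  field_simp at h ⊢
  linarith

theorem abs_logGammaSeq_sub_log_Gamma_le {x : ℝ} (hx : x ∈ Ioc 0 1) {n : ℕ} (hn : n ≠ 0) :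
    |BohrMollerup.logGammaSeq x n - log (Gamma x)| ≤ log (n + 1) - log n := by
  have hle := BohrMollerup.le_logGammaSeq convexOn_log_Gamma log_Gamma_add_one hx.1 hx.2 n
  have hge := BohrMollerup.ge_logGammaSeq convexOn_log_Gamma log_Gamma_add_one hx.1 hn
  simp only [Function.comp_apply, Gamma_one, log_one, zero_add] at hle hge
  have hlog : 0 ≤ log ((n : ℝ) + 1) - log n :=
    sub_nonneg.2 (log_le_log (by positivity) (le_add_of_nonneg_right zero_le_one))
  rw [abs_of_nonpos (sub_nonpos.2 hge)]
  linarith [mul_le_of_le_one_left hlog hx.2]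

theorem intervalIntegrable_log_add (m : ℝ) :
    IntervalIntegrable (fun x ↦ log (x + m)) volume 0 1 := by
  simpa using (intervalIntegral.intervalIntegrable_log' (a := 0 + m) (b := 1 + m)).comp_add_right m

theorem intervalIntegrable_logGammaSeq (n : ℕ) :
    IntervalIntegrable (fun x ↦ BohrMollerup.logGammaSeq x n) volume 0 1 := by
  have hsum : IntervalIntegrable (fun x : ℝ ↦ ∑ m ∈ range (n + 1), log (x + m)) volume 0 1 := by
    simpa [Finset.sum_fn] using
      IntervalIntegrable.sum (range (n + 1)) fun m _ ↦ intervalIntegrable_log_add m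
  exact (Continuous.intervalIntegrable (by fun_prop) _ _).sub hsum

theorem tendsto_integral_logGammaSeq_mul {g : ℝ → ℝ} (hg : Continuous g) :
    Tendsto (fun n : ℕ ↦ ∫ x in (0 : ℝ)..1, BohrMollerup.logGammaSeq x n * g x) atTop
      (𝓝 (∫ x in (0 : ℝ)..1, log (Gamma x) * g x)) := by
  have hzero : Tendsto (fun n : ℕ ↦ (log (n + 1) - log n) * ∫ x in (0 : ℝ)..1, |g x|) atTop
      (𝓝 0) := by
    simpa using tendsto_log_nat_add_one_sub_log.mul_const (∫ x in (0 : ℝ)..1, |g x|)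
  rw [tendsto_iff_norm_sub_tendsto_zero]
  refine squeeze_zero' (.of_forall fun _ ↦ norm_nonneg _) ?_ hzero
  filter_upwards [eventually_ne_atTop 0] with n hn
  rw [← intervalIntegral.integral_sub
    ((intervalIntegrable_logGammaSeq n).mul_continuousOn hg.continuousOn)
    (intervalIntegrable_log_Gamma.mul_continuousOn hg.continuousOn),
    ← intervalIntegral.integral_const_mul]
  refine intervalIntegral.norm_integral_le_of_norm_le zero_le_one
    (.of_forall fun x hx ↦ ?_) (Continuous.intervalIntegrable (by fun_prop) _ _)
  rw [← sub_mul, norm_mul, norm_eq_abs, norm_eq_abs]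
  gcongr
  exact abs_logGammaSeq_sub_log_Gamma_le hx hn

theorem sum_integral_log_add_mul_of_periodic {g : ℝ → ℝ} (hg : Continuous g)
    (hper : Function.Periodic g 1) (n : ℕ) :
    ∑ m ∈ range n, ∫ x in (0 : ℝ)..1, log (x + m) * g x = ∫ t in (0 : ℝ)..n, log t * g t := by
  have hadj := intervalIntegral.sum_integral_adjacent_intervals (μ := volume)
    (f := fun t ↦ log t * g t) (a := fun m : ℕ ↦ (m : ℝ)) (n := n) fun m _ ↦
      intervalIntegral.intervalIntegrable_log'.mul_continuousOn hg.continuousOn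
  rw [Nat.cast_zero] at hadj
  rw [← hadj]
  refine Finset.sum_congr rfl fun m _ ↦ ?_
  have hshift := intervalIntegral.integral_comp_add_right (a := 0) (b := 1)
    (fun t ↦ log t * g t) (m : ℝ)
  have hgm (x : ℝ) : g (x + m) = g x := by simpa using hper.nat_mul m x
  simpa [hgm, add_comm] using hshift

theorem integral_logGammaSeq_mul {g : ℝ → ℝ} (hg : Continuous g) (hper : Function.Periodic g 1)
    (hmean : ∫ x in (0 : ℝ)..1, g x = 0) (n : ℕ) :
    ∫ x in (0 : ℝ)..1, BohrMollerup.logGammaSeq x n * g x =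
      log n * (∫ x in (0 : ℝ)..1, x * g x) - ∫ t in (0 : ℝ)..(n + 1 : ℕ), log t * g t := by
  have hlog (m : ℕ) (_ : m ∈ range (n + 1)) :
      IntervalIntegrable (fun x : ℝ ↦ log (x + m) * g x) volume 0 1 :=
    (intervalIntegrable_log_add m).mul_continuousOn hg.continuousOn
  have hlogsum : IntervalIntegrable
      (fun x : ℝ ↦ ∑ m ∈ range (n + 1), log (x + m) * g x) volume 0 1 := by
    simpa [Finset.sum_fn] using IntervalIntegrable.sum (range (n + 1)) hlog
  have hexpand (x : ℝ) : BohrMollerup.logGammaSeq x n * g x =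
      log n * (x * g x) + log n.factorial * g x - ∑ m ∈ range (n + 1), log (x + m) * g x := by
    rw [BohrMollerup.logGammaSeq, ← Finset.sum_mul]
    ring
  simp_rw [hexpand]
  rw [intervalIntegral.integral_sub (Continuous.intervalIntegrable (by fun_prop) _ _) hlogsum,
    intervalIntegral.integral_add (Continuous.intervalIntegrable (by fun_prop) _ _)
      (Continuous.intervalIntegrable (by fun_prop) _ _),
    intervalIntegral.integral_const_mul, intervalIntegral.integral_const_mul, hmean, mul_zero,
    add_zero, intervalIntegral.integral_finsetSum hlog,
    sum_integral_log_add_mul_of_periodic hg hper]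

theorem integral_log_mul_sin (a : ℝ) {b : ℝ} (hb : 0 ≤ b) :
    a * ∫ t in (0 : ℝ)..b, log t * sin (a * t) = log b * (1 - cos (a * b)) - cin (a * b) := by
  have hcont : Continuous fun t ↦ log t * (1 - cos (a * t)) := by
    have heq : (fun t ↦ log t * (1 - cos (a * t))) =
        fun t ↦ t * log t * ((1 - cos (a * t)) / t) := by
      funext t
      rcases eq_or_ne t 0 with rfl | ht
      · simp
      · field_simp
    rw [heq]
    exact continuous_mul_log.mul (continuous_one_sub_cos_mul_div a)
  have hderiv : ∀ t ∈ Ioo 0 b, HasDerivAt (fun t ↦ log t * (1 - cos (a * t)))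
      ((1 - cos (a * t)) / t + a * (log t * sin (a * t))) t := fun t ht ↦
    ((hasDerivAt_log ht.1.ne').mul
      (((hasDerivAt_id t).const_mul a).cos.const_sub 1)).congr_deriv (by simp only [id]; ring)
  have hcin : IntervalIntegrable (fun t ↦ (1 - cos (a * t)) / t) volume 0 b :=
    (continuous_one_sub_cos_mul_div a).intervalIntegrable _ _
  have hlogsin : IntervalIntegrable (fun t ↦ a * (log t * sin (a * t))) volume 0 b :=
    (intervalIntegral.intervalIntegrable_log'.mul_continuousOn (by fun_prop)).const_mul a
  have hFTC := intervalIntegral.integral_eq_sub_of_hasDerivAt_of_le hb hcont.continuousOn hderiv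
    (hcin.add hlogsin)
  rw [intervalIntegral.integral_add hcin hlogsin, intervalIntegral.integral_const_mul,
    integral_one_sub_cos_mul_div, log_zero, zero_mul, sub_zero] at hFTC
  linarith

theorem integral_id_mul_sin {a : ℝ} (ha : a ≠ 0) :
    ∫ x in (0 : ℝ)..1, x * sin (a * x) = sin a / a ^ 2 - cos a / a := by
  have hderiv (x : ℝ) :
      HasDerivAt (fun x ↦ sin (a * x) / a ^ 2 - x * cos (a * x) / a) (x * sin (a * x)) x := by
    have hlin := (hasDerivAt_id x).const_mul a
    refine ((hlin.sin.div_const (a ^ 2)).sub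
      (((hasDerivAt_id x).mul hlin.cos).div_const a)).congr_deriv ?_
    simp only [id]
    field
  rw [intervalIntegral.integral_eq_sub_of_hasDerivAt (fun x _ ↦ hderiv x)
    (Continuous.intervalIntegrable (by fun_prop) _ _)]
  simp

theorem sin_two_pi_mul_nat (n : ℕ) : sin (2 * π * n) = 0 := by
  rw [show 2 * π * n = (2 * n : ℕ) * π by push_cast; ring, sin_nat_mul_pi]

theorem cos_two_pi_mul_nat (n : ℕ) : cos (2 * π * n) = 1 := by
  rw [mul_comm, cos_nat_mul_two_pi]

theorem integral_logGammaSeq_mul_sin {n : ℕ} (hn : n ≠ 0) (N : ℕ) :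
    ∫ x in (0 : ℝ)..1, BohrMollerup.logGammaSeq x N * sin (2 * π * n * x) =
      (cin (2 * π * n * (N + 1)) - log N) / (2 * π * n) := by
  have ha : 2 * π * (n : ℝ) ≠ 0 := by positivity
  have hper : Function.Periodic (fun x ↦ sin (2 * π * n * x)) 1 := fun x ↦ by
    simp only [mul_add, mul_one, sin_add, sin_two_pi_mul_nat, cos_two_pi_mul_nat]
    ring
  have hmean : ∫ x in (0 : ℝ)..1, sin (2 * π * n * x) = 0 := by
    rw [intervalIntegral.integral_comp_mul_left _ ha, integral_sin, mul_one, cos_two_pi_mul_nat]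
    simp
  have hlogsin := integral_log_mul_sin (2 * π * n) (b := (N + 1 : ℕ)) (by positivity)
  have hcos : cos (2 * π * n * (N + 1 : ℕ)) = 1 := by
    rw [mul_assoc, ← Nat.cast_mul, cos_two_pi_mul_nat]
  rw [hcos, sub_self, mul_zero, zero_sub] at hlogsin
  rw [integral_logGammaSeq_mul (by fun_prop) hper hmean, integral_id_mul_sin ha,
    sin_two_pi_mul_nat, cos_two_pi_mul_nat, eq_div_iff ha, sub_mul, mul_comm _ (2 * π * (n : ℝ)),
    mul_comm _ (2 * π * (n : ℝ)), hlogsin]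
  push_cast
  field

theorem integral_log_Gamma_mul_sin {n : ℕ} (hn : n ≠ 0) :
    ∫ x in (0 : ℝ)..1, log (Gamma x) * sin (2 * π * n * x) =
      (eulerMascheroniConstant + log (2 * π * n)) / (2 * π * n) := by
  refine tendsto_nhds_unique (tendsto_integral_logGammaSeq_mul (by fun_prop)) ?_
  have hatTop : Tendsto (fun N : ℕ ↦ 2 * n * (N + 1)) atTop atTop :=
    (tendsto_add_atTop_nat 1).const_mul_atTop' (by positivity)
  have hlim := (((tendsto_cin_nat_mul_pi_sub_log.comp hatTop).add
    tendsto_log_nat_add_one_sub_log).add_const (log (2 * π * n))).div_const (2 * π * n)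
  rw [add_zero] at hlim
  refine hlim.congr fun N ↦ ?_
  rw [integral_logGammaSeq_mul_sin hn, Function.comp_apply,
    show ((2 * n * (N + 1) : ℕ) : ℝ) * π = 2 * π * n * (N + 1) by push_cast; ring,
    log_mul (x := 2 * π * n) (by positivity) (by positivity)]
  ring

theorem hasSum_conj_fourierCoeff_mul {T : ℝ} [Fact (0 < T)]
    (f g : Lp ℂ 2 (AddCircle.haarAddCircle (T := T))) :
    HasSum (fun i ↦ conj (fourierCoeff f i) * fourierCoeff g i)
      (∫ t, conj (f t) * g t ∂AddCircle.haarAddCircle) := by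
  have h := fourierBasis.hasSum_inner_mul_inner f g
  rw [L2.inner_def] at h
  simp_rw [← inner_conj_symm f (fourierBasis _), ← fourierBasis.repr_apply_apply,
    fourierBasis_repr, RCLike.inner_apply'] at h
  exact h

theorem hasSum_conj_fourierCoeffOn_mul {f g : ℝ → ℂ} {a b : ℝ} (hab : a < b)
    (hf : MemLp f 2 (volume.restrict (Ioc a b))) (hg : MemLp g 2 (volume.restrict (Ioc a b))) :
    HasSum (fun i ↦ conj (fourierCoeffOn hab f i) * fourierCoeffOn hab g i)
      ((b - a)⁻¹ • ∫ x in a..b, conj (f x) * g x) := by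
  have : Fact (0 < b - a) := ⟨sub_pos.2 hab⟩
  rw [← add_sub_cancel a b] at hf hg
  have hf' := hf.memLp_liftIoc.haarAddCircle
  have hg' := hg.memLp_liftIoc.haarAddCircle
  convert! hasSum_conj_fourierCoeff_mul hf'.toLp hg'.toLp using 1
  · simp [fourierCoeff_congr_ae hf'.coeFn_toLp, fourierCoeff_congr_ae hg'.coeFn_toLp,
      fourierCoeff_liftIoc_eq]
  · nth_rw 2 [← add_sub_cancel a b]
    rw [← AddCircle.integral_liftIoc_eq_intervalIntegral, ← AddCircle.integral_haarAddCircle]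
    refine integral_congr_ae ?_
    filter_upwards [hf'.coeFn_toLp, hg'.coeFn_toLp] with x hfx hgx
    rw [hfx, hgx]
    rfl

theorem fourierCoeffOn_ofReal_neg {f : ℝ → ℝ} {a b : ℝ} (hab : a < b) (n : ℤ) :
    fourierCoeffOn hab (fun x ↦ (f x : ℂ)) (-n) =
      conj (fourierCoeffOn hab (fun x ↦ (f x : ℂ)) n) := by
  simp_rw [fourierCoeffOn_eq_integral, Complex.real_smul, map_mul,
    Complex.conj_ofReal, ← intervalIntegral.intervalIntegral_conj, smul_eq_mul, map_mul,
    ← fourier_neg, Complex.conj_ofReal]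

theorem fourierCoeffOn_ofReal_zero {f : ℝ → ℝ} {a b : ℝ} (hab : a < b) :
    fourierCoeffOn hab (fun x ↦ (f x : ℂ)) 0 = ((b - a)⁻¹ * ∫ x in a..b, f x : ℝ) := by
  simp [fourierCoeffOn_eq_integral, intervalIntegral.integral_ofReal]

theorem hasSum_re_conj_fourierCoeffOn_ofReal_mul {f g : ℝ → ℝ} {a b : ℝ} (hab : a < b)
    (hf : MemLp f 2 (volume.restrict (Ioc a b))) (hg : MemLp g 2 (volume.restrict (Ioc a b))) :
    HasSum (fun n : ℕ ↦ 2 * (conj (fourierCoeffOn hab (fun x ↦ (f x : ℂ)) (n + 1 : ℕ)) *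
        fourierCoeffOn hab (fun x ↦ (g x : ℂ)) (n + 1 : ℕ)).re)
      ((b - a)⁻¹ * (∫ x in a..b, f x * g x) -
        ((b - a)⁻¹ * ∫ x in a..b, f x) * ((b - a)⁻¹ * ∫ x in a..b, g x)) := by
  have h := hasSum_conj_fourierCoeffOn_mul (f := fun x ↦ (f x : ℂ)) (g := fun x ↦ (g x : ℂ)) hab
    hf.ofReal hg.ofReal
  have hre := Complex.hasSum_re ((hasSum_nat_add_iff' 1).2 h.nat_add_neg)
  simp only [fourierCoeffOn_ofReal_neg] at hre
  convert! hre using 1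
  · funext n
    rw [← map_mul, Complex.add_re, Complex.conj_re, two_mul]
  · simp only [Finset.sum_range_one, Nat.cast_zero, fourierCoeffOn_ofReal_zero, Complex.conj_ofReal,
      ← Complex.ofReal_mul, intervalIntegral.integral_ofReal, Complex.real_smul]
    norm_cast
    ring

theorem fourierCoeffOn_zero_one_ofReal {f : ℝ → ℝ} (hf : IntervalIntegrable f volume 0 1) (n : ℤ) :
    fourierCoeffOn zero_lt_one (fun x ↦ (f x : ℂ)) n =
      (∫ x in (0 : ℝ)..1, f x * cos (2 * π * n * x) : ℝ) -
        (∫ x in (0 : ℝ)..1, f x * sin (2 * π * n * x) : ℝ) * Complex.I := by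
  have hofReal {g : ℝ → ℝ} (hg : Continuous g) :
      IntervalIntegrable (fun x ↦ ((f x * g x : ℝ) : ℂ)) volume 0 1 :=
    have h := hf.mul_continuousOn hg.continuousOn
    ⟨h.1.ofReal, h.2.ofReal⟩
  rw [fourierCoeffOn_eq_integral, ← intervalIntegral.integral_ofReal,
    ← intervalIntegral.integral_ofReal, ← intervalIntegral.integral_mul_const,
    ← intervalIntegral.integral_sub (hofReal (by fun_prop))
      ((hofReal (by fun_prop)).mul_const _), sub_zero, div_one, one_smul]
  refine intervalIntegral.integral_congr fun x _ ↦ ?_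
  have harg : 2 * π * Complex.I * ((-n : ℤ) : ℂ) * x / ((1 : ℝ) : ℂ) =
      ((-(2 * π * n * x) : ℝ) : ℂ) * Complex.I := by
    push_cast
    ring
  simp only [fourier_coe_apply, smul_eq_mul, harg, Complex.exp_mul_I, ← Complex.ofReal_cos,
    ← Complex.ofReal_sin, cos_neg, sin_neg]
  push_cast
  ring

theorem fourierCoeffOn_log_Gamma {n : ℕ} (hn : n ≠ 0) :
    fourierCoeffOn zero_lt_one (fun x ↦ (log (Gamma x) : ℂ)) n =
      (1 / (4 * n) : ℝ) -
        ((eulerMascheroniConstant + log (2 * π * n)) / (2 * π * n) : ℝ) * Complex.I := by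
  rw [fourierCoeffOn_zero_one_ofReal intervalIntegrable_log_Gamma, Int.cast_natCast,
    integral_log_Gamma_mul_cos hn, integral_log_Gamma_mul_sin hn]

theorem one_sub_ofReal_mul_I_ne_zero (a : ℝ) : 1 - a * Complex.I ≠ 0 := fun h ↦ by
  simpa using congrArg Complex.re h

theorem fourierCoeffOn_exp (n : ℕ) :
    fourierCoeffOn zero_lt_one (fun x ↦ (exp x : ℂ)) n =
      (exp 1 - 1 : ℝ) / (1 - (2 * π * n : ℝ) * Complex.I) := by
  have hne := one_sub_ofReal_mul_I_ne_zero (2 * π * n)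
  have hperiod : Complex.exp (1 - (2 * π * n : ℝ) * Complex.I) = Complex.exp 1 := by
    rw [Complex.exp_eq_exp_iff_exists_int]
    refine ⟨-n, ?_⟩
    push_cast
    ring
  have hint : ∫ x in (0 : ℝ)..1, fourier (-(n : ℤ)) (x : AddCircle ((1 : ℝ) - 0)) • (exp x : ℂ) =
      ∫ x in (0 : ℝ)..1, Complex.exp ((1 - (2 * π * n : ℝ) * Complex.I) * x) := by
    refine intervalIntegral.integral_congr fun x _ ↦ ?_
    simp only [fourier_coe_apply, smul_eq_mul, Complex.ofReal_exp, ← Complex.exp_add]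
    congr 1
    push_cast
    ring
  rw [fourierCoeffOn_eq_integral, hint, integral_exp_mul_complex hne, Complex.ofReal_one, mul_one,
    hperiod]
  simp

theorem re_one_sub_ofReal_mul_I_mul (a : ℝ) (z : ℂ) :
    ((1 - a * Complex.I) * z).re = z.re + a * z.im := by
  rw [sub_mul, one_mul, mul_assoc, Complex.sub_re, Complex.re_ofReal_mul, Complex.I_mul_re]
  ring

theorem re_conj_div_one_sub_mul_I_mul (c a : ℝ) (z : ℂ) :
    (conj (c / (1 - a * Complex.I)) * z).re = c * (z.re + a * z.im) / (1 + a ^ 2) := by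
  have hconj : conj (c / (1 - a * Complex.I)) = c / (1 + a * Complex.I) := by
    simp only [map_div₀, map_sub, map_one, map_mul, Complex.conj_ofReal, Complex.conj_I, mul_neg,
      sub_neg_eq_add]
  have hne : 1 + a * Complex.I ≠ 0 := fun h ↦ by simpa using congrArg Complex.re h
  have hmul : c / (1 + a * Complex.I) * z =
      (c / (1 + a ^ 2) : ℝ) * ((1 - a * Complex.I) * z) := by
    have hsq : (1 + a * Complex.I) * (1 - a * Complex.I) = 1 + (a : ℂ) ^ 2 := by
      linear_combination -(a : ℂ) ^ 2 * Complex.I_sq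
    push_cast
    rw [← hsq]
    have := one_sub_ofReal_mul_I_ne_zero a
    field_simp
  rw [hconj, hmul, Complex.re_ofReal_mul, re_one_sub_ofReal_mul_I_mul]
  ring

theorem hasSum_integral_exp_mul {f : ℝ → ℝ} (hf : MemLp f 2 (volume.restrict (Ioc 0 1))) :
    HasSum (fun n : ℕ ↦ 2 * (exp 1 - 1) *
        ((fourierCoeffOn zero_lt_one (fun x ↦ (f x : ℂ)) (n + 1 : ℕ)).re +
          2 * π * (n + 1 : ℕ) * (fourierCoeffOn zero_lt_one (fun x ↦ (f x : ℂ)) (n + 1 : ℕ)).im) /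
        (1 + 4 * ((n : ℝ) + 1) ^ 2 * π ^ 2))
      ((∫ x in (0 : ℝ)..1, exp x * f x) - (exp 1 - 1) * ∫ x in (0 : ℝ)..1, f x) := by
  have h := hasSum_re_conj_fourierCoeffOn_ofReal_mul zero_lt_one
    (memLp_two_of_continuousOn continuous_exp.continuousOn) hf
  simp only [sub_zero, inv_one, one_mul, integral_exp, exp_zero] at h
  refine h.congr_fun fun n ↦ ?_
  rw [fourierCoeffOn_exp, re_conj_div_one_sub_mul_I_mul]
  push_cast
  ring

theorem cosh_half_div_sinh_half :
    cosh (1 / 2) / sinh (1 / 2) = (exp 1 + 1) / (exp 1 - 1) := by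
  have hexp : exp 1 = exp (1 / 2) ^ 2 := by
    rw [← exp_nat_mul]
    norm_num
  have hsub : exp (1 / 2) ^ 2 - 1 ≠ 0 := by
    rw [← hexp]
    exact (sub_pos.2 (one_lt_exp_iff.2 one_pos)).ne'
  have := exp_pos (1 / 2)
  rw [cosh_eq, sinh_eq, exp_neg, hexp]
  field_simp

theorem hasSum_one_div_one_add_four_mul_sq_mul_pi_sq :
    HasSum (fun n : ℕ ↦ 1 / (1 + 4 * ((n : ℝ) + 1) ^ 2 * π ^ 2))
      ((cosh (1 / 2) / sinh (1 / 2) - 2) / 4) := by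
  have he : exp 1 - 1 ≠ 0 := (sub_pos.2 (one_lt_exp_iff.2 one_pos)).ne'
  have h := (hasSum_integral_exp_mul
    (memLp_two_of_continuousOn continuous_exp.continuousOn)).div_const (2 * (exp 1 - 1) ^ 2)
  have hint : ∫ x in (0 : ℝ)..1, exp x * exp x = (exp 1 ^ 2 - 1) / 2 := by
    simp_rw [← exp_add, ← two_mul]
    rw [intervalIntegral.integral_comp_mul_left _ two_ne_zero, integral_exp, ← exp_nat_mul]
    simp only [mul_one, mul_zero, exp_zero, smul_eq_mul, Nat.cast_ofNat]
    ring
  rw [hint, integral_exp, exp_zero] at h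
  convert! h.congr_fun fun n ↦ ?_ using 1
  · rw [cosh_half_div_sinh_half]
    field
  · rw [fourierCoeffOn_exp, ← re_one_sub_ofReal_mul_I_mul,
      mul_div_cancel₀ _ (one_sub_ofReal_mul_I_ne_zero _), Complex.ofReal_re]
    field

theorem hasSum_integral_exp_mul_log_Gamma :
    HasSum (fun n : ℕ ↦ (1 / ((n : ℝ) + 1) -
          4 * (log (2 * π) + eulerMascheroniConstant + log (n + 1))) /
        (1 + 4 * ((n : ℝ) + 1) ^ 2 * π ^ 2))
      (2 / (exp 1 - 1) * (∫ x in (0 : ℝ)..1, exp x * log (Gamma x)) - log (2 * π)) := by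
  have he : exp 1 - 1 ≠ 0 := (sub_pos.2 (one_lt_exp_iff.2 one_pos)).ne'
  have h := (hasSum_integral_exp_mul memLp_log_Gamma).mul_left (2 / (exp 1 - 1))
  rw [integral_log_Gamma] at h
  convert! h.congr_fun fun n ↦ ?_ using 1
  · field
  · rw [fourierCoeffOn_log_Gamma n.succ_ne_zero]
    simp only [Complex.sub_re, Complex.sub_im, Complex.ofReal_re, Complex.ofReal_im,
      Complex.re_ofReal_mul, Complex.im_ofReal_mul, Complex.I_re, Complex.I_im]
    push_cast
    rw [log_mul (x := 2 * π) (by positivity) (by positivity)]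
    field

theorem hasSum_one_div_mul_one_add_four_mul_sq_mul_pi_sq :
    HasSum (fun n : ℕ ↦ 1 / (((n : ℝ) + 1) * (1 + 4 * ((n : ℝ) + 1) ^ 2 * π ^ 2)))
      ((digamma (Complex.I / (2 * π))).re + eulerMascheroniConstant) := by
  have h := hasSum_re_digamma_mul_I (y := 1 / (2 * π)) (by positivity)
  rw [show ((1 / (2 * π) : ℝ) : ℂ) * Complex.I = Complex.I / (2 * π) by push_cast; ring] at h
  refine h.congr_fun fun n ↦ ?_
  field

/-- `(2/(e − 1))·∫₀¹ eˣ·log Γ(x) dx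
      = C·(3 − coth(1/2)) + Re ψ(i/(2π)) − 4·∑_{n=1}^∞ (log n)/(1 + 4n²π²)`,
where `C = log(2π) + γ`, `ψ = Γ′/Γ` is the digamma function, and `coth` is the
hyperbolic cotangent. -/
theorem integral_exp_mul_log_Gamma :
    (2 / (Real.exp 1 - 1)) * ∫ x in (0:ℝ)..1, Real.exp x * Real.log (Real.Gamma x) =
      (Real.log (2 * π) + Real.eulerMascheroniConstant) *
          (3 - Real.cosh (1 / 2) / Real.sinh (1 / 2))
        + (digamma (Complex.I / (2 * π))).re
        - 4 * ∑' n : ℕ, Real.log (n + 1) / (1 + 4 * ((n : ℝ) + 1) ^ 2 * π ^ 2) := by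
  have hdigamma := hasSum_one_div_mul_one_add_four_mul_sq_mul_pi_sq
  have hcoth := hasSum_one_div_one_add_four_mul_sq_mul_pi_sq.mul_left
    (4 * (log (2 * π) + eulerMascheroniConstant))
  have hlog := ((hdigamma.sub hcoth).sub hasSum_integral_exp_mul_log_Gamma).div_const 4
  have hsum := (hlog.congr_fun (g := fun n : ℕ ↦
    log (n + 1) / (1 + 4 * ((n : ℝ) + 1) ^ 2 * π ^ 2)) fun n ↦ by field).tsum_eq
  rw [hsum]
  ring
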